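/- arXiv:math-ph/0311041 — 2 statements merged into one kernel-verified Lean document; each statement's English description precedes it below -/
import Mathlib

section
/- Assume m > n and let i be an integer with 1 ≤ i ≤ 2N−1 and i ≠ N. Let q¹ᵢ = ∑_{s=0}^{m+n} aₛ·z^{(m+n−s)N+i}·w^{Ns} and q²ᵢ = ∑_{s=0}^{m+n} bₛ·w^{(m+n−s)N+i}·z^{Ns} be quasi-invariants with a₀ = b₀ = 1. If λ₁, λ₂ ∈ ℂ are such that λ₁·q¹ᵢ + λ₂·q²ᵢ belongs to the ideal I of Q generated by z·w and z^{2N}+w^{2N}, then λ₁ = λ₂ = 0. -/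
open MvPolynomial Finset

noncomputable section

/-- The polynomial ring `R = ℂ[z,w]`. -/
abbrev R2 : Type := MvPolynomial (Fin 2) ℂ

/-- `z`, the first variable. -/
def zP : R2 := X 0

/-- `w`, the second variable (playing the role of `z̄`). -/
def wP : R2 := X 1

/-- `ε = exp(πi/N)`, a primitive `2N`-th root of unity. -/
def eps (N : ℕ) : ℂ := Complex.exp ((Real.pi : ℂ) * Complex.I / (N : ℂ))

/-- The reflection `σⱼ : z ↦ ε^j w, w ↦ ε^{-j} z` as a `ℂ`-algebra endomorphism. -/
def dihRefl (N j : ℕ) : R2 →ₐ[ℂ] R2 :=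
  aeval (fun k : Fin 2 => if k = 0 then C (eps N ^ j) * X 1 else C (eps N ^ (-(j : ℤ))) * X 0)

/-- The multiplicity `mⱼ`: `m` for even `j`, `n` for odd `j`. -/
def mult (m n j : ℕ) : ℕ := if Even j then m else n

/-- Quasi-invariance for the dihedral system `I₂(2N)` with multiplicities `(m,n)`. -/
def IsQuasiInv (N m n : ℕ) (p : R2) : Prop :=
  ∀ j < 2 * N, (zP - C (eps N ^ j) * wP) ^ (2 * mult m n j + 1) ∣ dihRefl N j p - p

/-- Membership in the ideal `I` of the ring `Q` of quasi-invariants generated by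
`z·w` and `z^{2N}+w^{2N}`: an element of `Q` lies in `I` iff it can be written as
`u·(z·w) + v·(z^{2N}+w^{2N})` with `u, v ∈ Q`. -/
def MemIdealI (N m n : ℕ) (p : R2) : Prop :=
  ∃ u v : R2, IsQuasiInv N m n u ∧ IsQuasiInv N m n v ∧
    p = u * (zP * wP) + v * (zP ^ (2 * N) + wP ^ (2 * N))

/-!
The infinitesimal rotation `z ∂/∂z - w ∂/∂w` anticommutes with every reflection, so its odd
iterates of order less than `2 mⱼ`, applied to a quasi-invariant, vanish on the `j`-th mirror
`z = ε ^ j w`. Fourier inversion over the mirrors of each parity separates the monomials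
`z ^ a w ^ (e - a)` by the residue of `a` mod `N`. If `a ≢ e - a` mod `N`, the coefficients in the
class of `a` satisfy `m` even moment equations and `n` alternating ones on an arithmetic progression
of nodes with nonvanishing pairwise sums. Summation by parts with step two lowers both `m` and `n`
by one, and once one of them is zero a Vandermonde determinant remains, so `m + n` such coefficients
must all vanish.

Hence no monomial `z ^ a w ^ b` with `a + b < (m + n) N` and `a ≢ b` mod `N` occurs in a
quasi-invariant. In an element `u z w + v (z ^ (2N) + w ^ (2N))` of the ideal, the coefficient of
the pure power `z ^ ((m + n) N + i)` is zero or such a coefficient of `v`, hence zero; in the given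
combination it is `λ₁`. The same power of `w` gives `λ₂`.
-/

section Moments

variable {R : Type*} [CommRing R]

lemma sum_range_mul_eq_sum_residues {M : Type*} [AddCommMonoid M] (f : ℕ → M) (N K : ℕ) :
    ∑ a ∈ range (N * K), f a = ∑ r ∈ range N, ∑ s ∈ range K, f (r + N * s) := by
  induction K with
  | zero => simp
  | succ K ih =>
    rw [mul_add_one, sum_range_add, ih]
    simp only [sum_range_succ, sum_add_distrib, add_comm (N * K)]

lemma add_pow_two_mul_sub_sub_pow_two_mul (u β : R) (k : ℕ) :
    (u + β) ^ (2 * k) - (u - β) ^ (2 * k) =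
      ∑ j ∈ range k, 2 * β ^ (2 * k - (2 * j + 1)) * (2 * k).choose (2 * j + 1) *
        u ^ (2 * j + 1) := by
  rw [sub_eq_add_neg u, add_pow, add_pow, ← sum_sub_distrib, sum_range_succ,
    sum_range_mul_eq_sum_residues, sum_range_succ, sum_range_one]
  have even_terms : ∀ j ∈ range k, (-β) ^ (2 * k - (0 + 2 * j)) = β ^ (2 * k - (0 + 2 * j)) :=
    fun j _ ↦ Even.neg_pow (by simp [← Nat.mul_sub]) β
  have odd_terms : ∀ j ∈ range k,
      (-β) ^ (2 * k - (2 * j + 1)) = -β ^ (2 * k - (2 * j + 1)) := fun j hj ↦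
    Odd.neg_pow ⟨k - j - 1, by have := mem_range.1 hj; omega⟩ β
  rw [sum_eq_zero fun j hj ↦ by rw [even_terms j hj, sub_self]]
  simp only [Nat.sub_self, pow_zero, sub_self, zero_add, add_zero]
  refine sum_congr rfl fun j hj ↦ ?_
  rw [add_comm 1, odd_terms j hj]
  ring

variable [IsDomain R]

lemma eq_zero_of_even_moments_eq_zero {x : ℕ → R} (hx : Function.Injective fun s ↦ x s ^ 2)
    {m : ℕ} {d : ℕ → R} (h : ∀ k < m, ∑ s ∈ range m, d s * x s ^ (2 * k) = 0) :
    ∀ s < m, d s = 0 := by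
  have hv := Matrix.eq_zero_of_forall_pow_sum_mul_pow_eq_zero
    (f := fun s : Fin m ↦ x s ^ 2) (v := fun s ↦ d s) (hx.comp Fin.val_injective)
    fun k ↦ by simpa only [← pow_mul, sum_range] using h k k.2
  exact fun s hs ↦ congrFun hv ⟨s, hs⟩

lemma sum_residue_eq_zero_of_isPrimitiveRoot {ζ : R} {N : ℕ} (hζ : IsPrimitiveRoot ζ N) {K : ℕ}
    {f : ℕ → R} (h : ∀ l < N, ∑ a ∈ range (N * K), f a * ζ ^ (l * a) = 0) :
    ∀ r < N, ∑ s ∈ range K, f (r + N * s) = 0 := by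
  have hv := Matrix.eq_zero_of_forall_pow_sum_mul_pow_eq_zero
    (f := fun r : Fin N ↦ ζ ^ (r : ℕ)) (v := fun r ↦ ∑ s ∈ range K, f (r + N * s))
    (fun r r' hr ↦ Fin.ext (hζ.pow_inj r.2 r'.2 hr)) fun l ↦ by
      rw [← h l l.2, sum_range_mul_eq_sum_residues, sum_range]
      refine sum_congr rfl fun r _ ↦ ?_
      rw [sum_mul]
      refine sum_congr rfl fun s _ ↦ ?_
      rw [mul_add, pow_add, mul_left_comm (l : ℕ) N, pow_mul ζ N, hζ.pow_eq_one, one_pow, mul_one,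
        mul_comm (l : ℕ), pow_mul]
  exact fun r hr ↦ congrFun hv ⟨r, hr⟩

variable [CharZero R]

lemma odd_moments_eq_zero_of_central_differences {ι : Type*} {S : Finset ι} {h u : ι → R} {β : R}
    (hβ : β ≠ 0) {m : ℕ}
    (hdiff : ∀ k ≤ m, ∑ s ∈ S, h s * ((u s + β) ^ (2 * k) - (u s - β) ^ (2 * k)) = 0) :
    ∀ k < m, ∑ s ∈ S, h s * u s ^ (2 * k + 1) = 0 := by
  intro k
  induction k using Nat.strong_induction_on with
  | _ k ih =>
    intro hk
    have expansion := hdiff (k + 1) hk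
    simp only [add_pow_two_mul_sub_sub_pow_two_mul, mul_sum] at expansion
    rw [sum_comm] at expansion
    simp only [mul_left_comm (h _), ← mul_sum] at expansion
    rw [sum_range_succ, sum_eq_zero fun j hj ↦ by
      rw [ih j (mem_range.1 hj) ((mem_range.1 hj).trans hk), mul_zero], zero_add] at expansion
    have hchoose : ((2 * (k + 1)).choose (2 * k + 1) : R) ≠ 0 :=
      Nat.cast_ne_zero.2 (Nat.choose_pos (by omega)).ne'
    exact (mul_eq_zero.1 expansion).resolve_left
      (mul_ne_zero (mul_ne_zero two_ne_zero (pow_ne_zero _ hβ)) hchoose)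

end Moments

section StepTwoSum

variable {R : Type*} [CommRing R]

/-- The partial sums `d s + d (s - 2) + d (s - 4) + ⋯`, for summation by parts with step two. -/
def stepTwoSum (d : ℕ → R) : ℕ → R
  | 0 => d 0
  | 1 => d 1
  | s + 2 => d (s + 2) + stepTwoSum d s

lemma eq_zero_of_stepTwoSum_eq_zero {d : ℕ → R} {K : ℕ} (h : ∀ s < K, stepTwoSum d s = 0) :
    ∀ s < K, d s = 0
  | 0, hs => h 0 hs
  | 1, hs => h 1 hs
  | s + 2, hs => by simpa [stepTwoSum, h s (by omega)] using h (s + 2) hs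

lemma sum_mul_eq_sum_stepTwoSum_mul (d g : ℕ → R) (K : ℕ) :
    ∑ s ∈ range (K + 2), d s * g s =
      ∑ s ∈ range K, stepTwoSum d s * (g s - g (s + 2)) + stepTwoSum d K * g K
        + stepTwoSum d (K + 1) * g (K + 1) := by
  induction K with
  | zero => simp [sum_range_succ, stepTwoSum]
  | succ K ih =>
    rw [sum_range_succ, ih, sum_range_succ _ K]
    simp only [stepTwoSum]
    ring

variable [IsDomain R] [CharZero R]

lemma stepTwoSum_last_eq_zero {d : ℕ → R} {K : ℕ} (h : ∑ s ∈ range (K + 2), d s = 0)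
    (h' : ∑ s ∈ range (K + 2), d s * (-1) ^ s = 0) :
    stepTwoSum d K = 0 ∧ stepTwoSum d (K + 1) = 0 := by
  have add_eq : stepTwoSum d K + stepTwoSum d (K + 1) = 0 := by
    rw [← h, ← sum_congr rfl fun s _ ↦ mul_one (d s), sum_mul_eq_sum_stepTwoSum_mul]
    simp
  have sub_eq : stepTwoSum d K - stepTwoSum d (K + 1) = 0 := by
    rw [sum_mul_eq_sum_stepTwoSum_mul] at h'
    refine (mul_eq_zero.1 ?_).resolve_right (pow_ne_zero K (neg_ne_zero.2 (one_ne_zero (α := R))))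
    rw [sub_mul, ← h']
    simp [pow_add, sub_eq_add_neg]
  have two_mul_eq : 2 * stepTwoSum d K = 0 := by linear_combination add_eq + sub_eq
  have hK := (mul_eq_zero.1 two_mul_eq).resolve_left two_ne_zero
  exact ⟨hK, by simpa [hK] using add_eq⟩

-- Step two is what makes this work for both signs `c = ±1`: then `c ^ (s + 2) = c ^ s`, and the
-- differences of even powers are centered at the node `x (s + 1)`, hence odd in it.
lemma stepTwoSum_even_moments_eq_zero {c β : R} (hc : c ^ 2 = 1) (hβ : β ≠ 0) {x : ℕ → R}
    (hstep : ∀ s, x (s + 1) = x s + β) {d : ℕ → R} {K m : ℕ} (hK : stepTwoSum d K = 0)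
    (hK' : stepTwoSum d (K + 1) = 0)
    (h : ∀ k < m + 1, ∑ s ∈ range (K + 2), d s * (c ^ s * x s ^ (2 * k)) = 0) :
    ∀ k < m, ∑ s ∈ range K,
      stepTwoSum d s * x (s + 1) * (c ^ s * x (s + 1) ^ (2 * k)) = 0 := by
  intro k hk
  have odd_moment := odd_moments_eq_zero_of_central_differences (S := range K) (m := m)
    (h := fun s ↦ stepTwoSum d s * c ^ s) (u := fun s ↦ x (s + 1)) hβ ?_ k hk
  · rw [← odd_moment]
    exact sum_congr rfl fun s _ ↦ by ring
  · intro k hk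
    have parts := h k (Nat.lt_succ_of_le hk)
    rw [sum_mul_eq_sum_stepTwoSum_mul, hK, hK', zero_mul, zero_mul, add_zero, add_zero,
      ← neg_eq_zero, ← sum_neg_distrib] at parts
    rw [← parts]
    refine sum_congr rfl fun s _ ↦ ?_
    rw [pow_add c s 2, hc, ← hstep, hstep s, add_sub_cancel_right]
    ring

lemma sq_injective_of_add_ne_zero {β : R} (hβ : β ≠ 0) {x : ℕ → R}
    (hstep : ∀ s, x (s + 1) = x s + β) (hadd : ∀ s t, x s + x t ≠ 0) :
    Function.Injective fun s ↦ x s ^ 2 := by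
  have hx (s : ℕ) : x s = x 0 + s * β := by
    induction s with
    | zero => simp
    | succ s ih => rw [hstep, ih]; push_cast; ring
  intro s t hst
  have hxst := (sq_eq_sq_iff_eq_or_eq_neg.1 hst).resolve_right
    fun h ↦ hadd s t (by rw [h, neg_add_cancel])
  rw [hx s, hx t] at hxst
  exact Nat.cast_injective (mul_right_cancel₀ hβ (add_left_cancel hxst))

theorem eq_zero_of_even_and_alternating_moments_eq_zero {β : R} (hβ : β ≠ 0) {x : ℕ → R}
    {m n : ℕ} {d : ℕ → R} (hstep : ∀ s, x (s + 1) = x s + β) (hadd : ∀ s t, x s + x t ≠ 0)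
    (heven : ∀ k < m, ∑ s ∈ range (m + n), d s * x s ^ (2 * k) = 0)
    (halt : ∀ k < n, ∑ s ∈ range (m + n), d s * ((-1) ^ s * x s ^ (2 * k)) = 0) :
    ∀ s < m + n, d s = 0 := by
  have hsq := sq_injective_of_add_ne_zero hβ hstep hadd
  induction m generalizing n x d with
  | zero =>
    rw [zero_add] at halt ⊢
    have hsign := eq_zero_of_even_moments_eq_zero hsq (d := fun s ↦ d s * (-1) ^ s) (m := n)
      fun k hk ↦ by simpa only [mul_assoc] using halt k hk
    exact fun s hs ↦ (mul_eq_zero.1 (hsign s hs)).resolve_right (pow_ne_zero s (by simp))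
  | succ m ih =>
    rcases n with _ | n
    · exact eq_zero_of_even_moments_eq_zero hsq heven
    rw [show m + 1 + (n + 1) = m + n + 2 by ring] at heven halt ⊢
    obtain ⟨hK, hK'⟩ := stepTwoSum_last_eq_zero (d := d) (K := m + n)
      (by simpa using heven 0 m.succ_pos) (by simpa using halt 0 n.succ_pos)
    have smaller : ∀ s < m + n, stepTwoSum d s * x (s + 1) = 0 :=
      ih (fun s ↦ hstep (s + 1)) (fun s t ↦ hadd (s + 1) (t + 1))
        (by simpa only [one_pow, one_mul] using
          stepTwoSum_even_moments_eq_zero (one_pow 2) hβ hstep hK hK' (by simpa using heven))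
        (stepTwoSum_even_moments_eq_zero neg_one_sq hβ hstep hK hK' halt)
        (hsq.comp (add_left_injective 1))
    refine eq_zero_of_stepTwoSum_eq_zero fun s hs ↦ ?_
    obtain hs | rfl | rfl : s < m + n ∨ s = m + n ∨ s = m + n + 1 := by omega
    · exact (mul_eq_zero.1 (smaller s hs)).resolve_right fun h ↦
        hadd s.succ s.succ (by rw [h, add_zero])
    · exact hK
    · exact hK'

end StepTwoSum

section AngularDerivation

lemma pow_dvd_derivation_iterate {R A : Type*} [CommRing R] [CommRing A] [Algebra R A]
    (D : Derivation R A A) {a x : A} {l k : ℕ} (h : a ^ (l + k) ∣ x) : a ^ k ∣ D^[l] x := by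
  induction l generalizing x with
  | zero => simpa using h
  | succ l ih =>
    rw [Function.iterate_succ_apply]
    obtain ⟨y, rfl⟩ := h
    rw [add_right_comm]
    refine ih ?_
    rw [D.leibniz, D.leibniz_pow, Nat.add_sub_cancel]
    simp only [smul_eq_mul, nsmul_eq_mul]
    exact dvd_add (Dvd.dvd.mul_right (pow_dvd_pow a (Nat.le_succ _)) _)
      (Dvd.dvd.mul_left (Dvd.dvd.mul_left (dvd_mul_right _ _) _) _)

variable (R : Type*) [CommRing R]

/-- The infinitesimal rotation `z ∂/∂z - w ∂/∂w` of `R[z,w]`. -/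
def angularDerivation : Derivation R (MvPolynomial (Fin 2) R) (MvPolynomial (Fin 2) R) :=
  mkDerivation R ![X 0, -X 1]

variable {R}

lemma angularDerivation_monomial (u : Fin 2 →₀ ℕ) (r : R) :
    angularDerivation R (monomial u r) = monomial u (((u 0 : R) - u 1) * r) := by
  have X_mul_pderiv (k : Fin 2) :
      monomial (u - Finsupp.single k 1) (u k : R) * X k = monomial u (u k : R) := by
    rw [X, monomial_mul, mul_one]
    rcases Nat.eq_zero_or_pos (u k) with hk | hk
    · simp [hk]
    · rw [tsub_add_cancel_of_le (Finsupp.single_le_iff.2 hk)]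
  rw [angularDerivation, mkDerivation_monomial, Finsupp.sum_fintype _ _ (by simp)]
  simp only [Fin.sum_univ_two, Matrix.cons_val_zero, Matrix.cons_val_one, smul_eq_mul, mul_neg,
    X_mul_pderiv, ← sub_eq_add_neg, ← map_sub, smul_monomial, mul_comm r]

lemma coeff_angularDerivation_iterate (p : MvPolynomial (Fin 2) R) (l : ℕ) (u : Fin 2 →₀ ℕ) :
    ((angularDerivation R)^[l] p).coeff u = ((u 0 : R) - u 1) ^ l * p.coeff u := by
  have coeff_apply (p : MvPolynomial (Fin 2) R) :
      (angularDerivation R p).coeff u = ((u 0 : R) - u 1) * p.coeff u := by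
    induction p using MvPolynomial.induction_on' with
    | monomial v r =>
      rw [angularDerivation_monomial, coeff_monomial, coeff_monomial]
      split_ifs with h
      · rw [h]
      · rw [mul_zero]
    | add p q hp hq => rw [map_add, coeff_add, coeff_add, hp, hq, mul_add]
  induction l with
  | zero => simp
  | succ l ih => rw [Function.iterate_succ_apply', coeff_apply, ih, pow_succ', mul_assoc]

/-- Restriction of polynomials in `z, w` to the line `z = c w`, parametrized by `w`. -/
def lineRestrict (c : R) : MvPolynomial (Fin 2) R →ₐ[R] Polynomial R :=
  aeval ![Polynomial.C c * Polynomial.X, Polynomial.X]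

/-- The coefficient of `z ^ a * w ^ (e - a)`, with value `0` for `a > e`: the degree-`e` part of
`p` as a sequence indexed by the exponent of `z`. -/
def diagCoeff (e : ℕ) (p : MvPolynomial (Fin 2) R) (a : ℕ) : R :=
  if a ≤ e then p.coeff (Finsupp.single 0 a + Finsupp.single 1 (e - a)) else 0

lemma diagCoeff_eq_coeff (p : MvPolynomial (Fin 2) R) (u : Fin 2 →₀ ℕ) :
    diagCoeff (u 0 + u 1) p (u 0) = p.coeff u := by
  rw [diagCoeff, if_pos (Nat.le_add_right _ _), Nat.add_sub_cancel_left]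
  congr 1
  ext k
  fin_cases k <;> simp

lemma diagCoeff_angularDerivation_iterate (e l : ℕ) (p : MvPolynomial (Fin 2) R) (a : ℕ) :
    diagCoeff e ((angularDerivation R)^[l] p) a = diagCoeff e p a * (2 * a - e) ^ l := by
  unfold diagCoeff
  split_ifs with ha
  · rw [coeff_angularDerivation_iterate, mul_comm]
    congr 2
    have z_exponent : (Finsupp.single 0 a + Finsupp.single 1 (e - a) : Fin 2 →₀ ℕ) 0 = a := by simp
    have w_exponent : (Finsupp.single 0 a + Finsupp.single 1 (e - a) : Fin 2 →₀ ℕ) 1 = e - a := by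
      simp
    rw [z_exponent, w_exponent, Nat.cast_sub ha]
    ring
  · rw [zero_mul]

lemma coeff_lineRestrict (c : R) {e M : ℕ} (he : e < M) (p : MvPolynomial (Fin 2) R) :
    (lineRestrict c p).coeff e = ∑ a ∈ range M, diagCoeff e p a * c ^ a := by
  induction p using MvPolynomial.induction_on' with
  | monomial u r =>
    have restrict_monomial : lineRestrict c (monomial u r) =
        Polynomial.C (r * c ^ u 0) * Polynomial.X ^ (u 0 + u 1) := by
      rw [lineRestrict, aeval_monomial, Finsupp.prod_fintype _ _ (by simp), Fin.prod_univ_two]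
      simp only [Matrix.cons_val_zero, Matrix.cons_val_one, Polynomial.algebraMap_eq, map_mul,
        map_pow, mul_pow, pow_add]
      ring
    have diagCoeff_monomial (a : ℕ) :
        diagCoeff e (monomial u r) a = if a = u 0 ∧ e = u 0 + u 1 then r else 0 := by
      unfold diagCoeff
      rw [coeff_monomial, ← ite_and]
      refine if_congr ?_ rfl rfl
      have exponents_eq : u = Finsupp.single 0 a + Finsupp.single 1 (e - a) ↔
          u 0 = a ∧ u 1 = e - a := by
        simp [Finsupp.ext_iff, Fin.forall_fin_two]
      rw [exponents_eq]
      omega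
    rw [restrict_monomial, Polynomial.coeff_C_mul, Polynomial.coeff_X_pow]
    simp only [diagCoeff_monomial, ite_and, ite_mul, zero_mul, sum_ite_eq']
    rcases eq_or_ne e (u 0 + u 1) with h | h
    · rw [if_pos h, if_pos h, mul_one, if_pos (mem_range.2 (by omega))]
    · rw [if_neg h, if_neg h, mul_zero, ite_self]
  | add p q hp hq =>
    rw [map_add, Polynomial.coeff_add, hp, hq, ← sum_add_distrib]
    refine sum_congr rfl fun a _ ↦ ?_
    unfold diagCoeff
    split_ifs
    · rw [coeff_add, add_mul]
    · simp

end AngularDerivation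

section Reflections

lemma eps_pow_self {N : ℕ} (hN : N ≠ 0) : eps N ^ N = -1 := by
  rw [eps, ← Complex.exp_nat_mul, mul_div_cancel₀ _ (Nat.cast_ne_zero.2 hN), Complex.exp_pi_mul_I]

lemma eps_ne_zero (N : ℕ) : eps N ≠ 0 :=
  Complex.exp_ne_zero _

lemma isPrimitiveRoot_eps_sq {N : ℕ} (hN : N ≠ 0) : IsPrimitiveRoot (eps N ^ 2) N := by
  convert Complex.isPrimitiveRoot_exp N hN using 1
  rw [eps, ← Complex.exp_nat_mul]
  congr 1
  push_cast
  ring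

lemma angularDerivation_dihRefl (N j : ℕ) (p : R2) :
    angularDerivation ℂ (dihRefl N j p) = -dihRefl N j (angularDerivation ℂ p) := by
  induction p using MvPolynomial.induction_on with
  | C a => simp
  | add p q hp hq => rw [map_add, map_add, hp, hq, map_add, map_add, neg_add]
  | mul_X p k hp =>
    have on_generators : angularDerivation ℂ (dihRefl N j (X k)) =
        -dihRefl N j (angularDerivation ℂ (X k)) := by
      fin_cases k <;> simp [dihRefl, angularDerivation, mkDerivation_X]
    simp only [map_mul, map_add, Derivation.leibniz, smul_eq_mul, hp, on_generators]
    ring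

lemma angularDerivation_iterate_dihRefl_of_odd {l : ℕ} (hl : Odd l) (N j : ℕ) (p : R2) :
    (angularDerivation ℂ)^[l] (dihRefl N j p) = -dihRefl N j ((angularDerivation ℂ)^[l] p) := by
  have all_iterates (l : ℕ) : (angularDerivation ℂ)^[l] (dihRefl N j p) =
      (-1) ^ l * dihRefl N j ((angularDerivation ℂ)^[l] p) := by
    induction l generalizing p with
    | zero => simp
    | succ l ih =>
      rw [Function.iterate_succ_apply, angularDerivation_dihRefl, iterate_map_neg, ih,
        Function.iterate_succ_apply, pow_succ, mul_neg_one, neg_mul]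
  rw [all_iterates, hl.neg_one_pow, neg_one_mul]

lemma lineRestrict_dihRefl (N j : ℕ) (p : R2) :
    lineRestrict (eps N ^ j) (dihRefl N j p) = lineRestrict (eps N ^ j) p := by
  have hε : (eps N ^ j)⁻¹ * eps N ^ j = 1 := inv_mul_cancel₀ (pow_ne_zero j (eps_ne_zero N))
  rw [← AlgHom.comp_apply]
  congr 1
  refine algHom_ext fun k ↦ ?_
  fin_cases k
  · simp [lineRestrict, dihRefl, Polynomial.algebraMap_eq]
  · suffices Polynomial.C (eps N ^ j)⁻¹ * (Polynomial.C (eps N ^ j) * Polynomial.X) =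
        Polynomial.X by
      simpa [lineRestrict, dihRefl, Polynomial.algebraMap_eq] using this
    rw [← mul_assoc, ← map_mul, hε, map_one, one_mul]

lemma lineRestrict_mirror (c : ℂ) : lineRestrict c (zP - C c * wP) = 0 := by
  simp [lineRestrict, zP, wP, Polynomial.algebraMap_eq]

variable {N m n : ℕ} {p : R2}

lemma IsQuasiInv.lineRestrict_angularDerivation_iterate_eq_zero (hp : IsQuasiInv N m n p) {j k : ℕ}
    (hj : j < 2 * N) (hk : k < mult m n j) :
    lineRestrict (eps N ^ j) ((angularDerivation ℂ)^[2 * k + 1] p) = 0 := by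
  set D := angularDerivation ℂ
  have mirror_dvd : (zP - C (eps N ^ j) * wP) ^ 1 ∣ D^[2 * k + 1] (dihRefl N j p - p) :=
    pow_dvd_derivation_iterate D ((pow_dvd_pow _ (by omega)).trans (hp j hj))
  have vanish := map_dvd (lineRestrict (eps N ^ j)) mirror_dvd
  rw [pow_one, lineRestrict_mirror, zero_dvd_iff] at vanish
  rw [iterate_map_sub, map_sub, angularDerivation_iterate_dihRefl_of_odd (odd_two_mul_add_one k),
    map_neg, lineRestrict_dihRefl] at vanish
  exact self_eq_neg.1 (sub_eq_zero.1 vanish).symm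

lemma IsQuasiInv.sum_diagCoeff_eq_zero (hp : IsQuasiInv N m n p) {j k e M : ℕ}
    (hj : j < 2 * N) (hk : k < mult m n j) (he : e < M) :
    ∑ a ∈ range M, diagCoeff e p a * (2 * a - e) ^ (2 * k + 1) * (eps N ^ j) ^ a = 0 := by
  simp only [← diagCoeff_angularDerivation_iterate, ← coeff_lineRestrict _ he,
    hp.lineRestrict_angularDerivation_iterate_eq_zero hj hk, Polynomial.coeff_zero]

lemma IsQuasiInv.sum_residue_diagCoeff_eq_zero (hp : IsQuasiInv N m n p) {e r t k K : ℕ}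
    (he : e < N * K) (hr : r < N) (ht : t < 2) (hk : k < mult m n t) :
    ∑ s ∈ range K, diagCoeff e p (r + N * s) *
      (((-1) ^ t) ^ s * (2 * (r + N * s : ℕ) - e : ℂ) ^ (2 * k + 1)) = 0 := by
  have hN : N ≠ 0 := by omega
  have fourier := sum_residue_eq_zero_of_isPrimitiveRoot (isPrimitiveRoot_eps_sq hN) (K := K)
    (f := fun a ↦ diagCoeff e p a * (2 * a - e) ^ (2 * k + 1) * (eps N ^ t) ^ a) (fun l hl ↦ by
      rw [← hp.sum_diagCoeff_eq_zero (j := 2 * l + t) (k := k) (by omega)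
        (by simpa [mult, Nat.even_add] using hk) he]
      exact sum_congr rfl fun a _ ↦ by ring) r hr
  have split_phase (s : ℕ) : (eps N ^ t) ^ (r + N * s) = (eps N ^ t) ^ r * ((-1) ^ t) ^ s := by
    rw [pow_add, pow_mul _ N, pow_right_comm (eps N) t N, eps_pow_self hN]
  refine (mul_eq_zero.1 ?_).resolve_left
    (pow_ne_zero r (pow_ne_zero t (eps_ne_zero N)))
  rw [← fourier, mul_sum]
  refine sum_congr rfl fun s _ ↦ ?_
  rw [split_phase, pow_succ _ (2 * k)]
  ring

theorem IsQuasiInv.coeff_eq_zero (hp : IsQuasiInv N m n p) {u : Fin 2 →₀ ℕ}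
    (hdeg : u 0 + u 1 < (m + n) * N) (hu : ¬ u 0 ≡ u 1 [MOD N]) : p.coeff u = 0 := by
  have hN : 0 < N := Nat.pos_of_ne_zero fun h ↦ by simp [h] at hdeg
  set e := u 0 + u 1
  set r := u 0 % N
  have hr : r < N := Nat.mod_lt _ hN
  -- The exponent of `z` minus that of `w` in the degree-`e` monomial with `z`-exponent `r + N s`.
  let x (s : ℕ) : ℂ := 2 * (r + N * s : ℕ) - e
  have residue (s : ℕ) : r + N * s ≡ u 0 [MOD N] := by simp [Nat.ModEq, r]
  have add_ne_zero (s t : ℕ) : x s + x t ≠ 0 := fun h ↦ by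
    have sum_eq : (r + N * s) + (r + N * t) = u 0 + u 1 := by
      have : (((r + N * s) + (r + N * t) : ℕ) : ℂ) = e := by
        rw [Nat.cast_add]
        linear_combination h / 2
      exact_mod_cast this
    exact hu (Nat.ModEq.add_left_cancel' (u 0) (sum_eq ▸ ((residue s).add (residue t)).symm))
  have moments {t k : ℕ} (ht : t < 2) (hk : k < mult m n t) :
      ∑ s ∈ range (m + n), diagCoeff e p (r + N * s) * x s * (((-1) ^ t) ^ s * x s ^ (2 * k)) =
        0 := by
    rw [← hp.sum_residue_diagCoeff_eq_zero (by rwa [mul_comm]) hr ht hk]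
    exact sum_congr rfl fun s _ ↦ by ring
  have moment_solution := eq_zero_of_even_and_alternating_moments_eq_zero
    (β := 2 * (N : ℂ)) (x := x) (d := fun s ↦ diagCoeff e p (r + N * s) * x s)
    (mul_ne_zero two_ne_zero (Nat.cast_ne_zero.2 hN.ne'))
    (fun s ↦ by simp only [x]; push_cast; ring) add_ne_zero
    (fun k hk ↦ by simpa using moments (t := 0) zero_lt_two (by simpa [mult] using hk))
    (fun k hk ↦ by simpa using moments (t := 1) one_lt_two (by simpa [mult] using hk))
    (u 0 / N) (Nat.div_lt_of_lt_mul (by rw [mul_comm]; omega))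
  have x_ne_zero : x (u 0 / N) ≠ 0 := fun h ↦ add_ne_zero _ _ (by rw [h, add_zero])
  have diagCoeff_eq_zero := (mul_eq_zero.1 moment_solution).resolve_right x_ne_zero
  rwa [Nat.mod_add_div, diagCoeff_eq_coeff] at diagCoeff_eq_zero

end Reflections

section AxisCoefficients

variable {σ R : Type*} [CommSemiring R] {k l : σ}

lemma coeff_single_mul_X_pow (p : MvPolynomial σ R) (k : σ) (d e : ℕ) :
    (p * X k ^ d).coeff (Finsupp.single k e) =
      if d ≤ e then p.coeff (Finsupp.single k (e - d)) else 0 := by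
  classical
  rw [X_pow_eq_monomial, coeff_mul_monomial', mul_one, Finsupp.single_tsub]
  exact if_congr Finsupp.single_le_single rfl rfl

lemma coeff_single_mul_X_pow_of_ne (hkl : k ≠ l) (p : MvPolynomial σ R) {d : ℕ} (hd : d ≠ 0)
    (e : ℕ) : (p * X l ^ d).coeff (Finsupp.single k e) = 0 := by
  classical
  rw [X_pow_eq_monomial, coeff_mul_monomial', if_neg]
  simp [Finsupp.single_le_iff, hkl, hd]

lemma coeff_single_sum_mul_X_pow_mul_X_pow (hkl : k ≠ l) (c : ℕ → R) {N : ℕ} (hN : N ≠ 0)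
    (M i : ℕ) :
    (∑ s ∈ range (M + 1), C (c s) * X k ^ ((M - s) * N + i) * X l ^ (N * s) :
      MvPolynomial σ R).coeff (Finsupp.single k (M * N + i)) = c 0 := by
  rw [coeff_sum, sum_range_succ', sum_eq_zero fun s _ ↦
    coeff_single_mul_X_pow_of_ne hkl _ (mul_ne_zero hN s.succ_ne_zero) _]
  rw [zero_add, Nat.sub_zero, mul_zero, pow_zero, mul_one, coeff_single_mul_X_pow, if_pos le_rfl,
    Nat.sub_self, Finsupp.single_zero]
  exact coeff_zero_C _

lemma coeff_single_sum_mul_X_pow_mul_X_pow_of_ne (hkl : k ≠ l) (c : ℕ → R) (N M : ℕ) {i : ℕ}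
    (hi : i ≠ 0) (e : ℕ) :
    (∑ s ∈ range (M + 1), C (c s) * X k ^ ((M - s) * N + i) * X l ^ (N * s) :
      MvPolynomial σ R).coeff (Finsupp.single l e) = 0 := by
  rw [coeff_sum]
  refine sum_eq_zero fun s _ ↦ ?_
  rw [mul_right_comm]
  exact coeff_single_mul_X_pow_of_ne hkl.symm _ (by omega) e

end AxisCoefficients

theorem MemIdealI.coeff_single_eq_zero {N m n : ℕ} {p : R2} (hp : MemIdealI N m n p) (k : Fin 2)
    {e : ℕ} (he : e < (m + n + 2) * N) (hNe : ¬ N ∣ e) : p.coeff (Finsupp.single k e) = 0 := by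
  obtain ⟨u, v, -, hv, rfl⟩ := hp
  have hN : 2 * N ≠ 0 := fun h ↦ by simp [show N = 0 by omega] at he
  obtain ⟨l, hkl, hmul, hadd⟩ : ∃ l, k ≠ l ∧ zP * wP = X k * X l ^ 1 ∧
      zP ^ (2 * N) + wP ^ (2 * N) = X k ^ (2 * N) + X l ^ (2 * N) := by
    fin_cases k
    · exact ⟨1, zero_ne_one, by simp [zP, wP], rfl⟩
    · exact ⟨0, one_ne_zero, by simp [zP, wP, mul_comm], add_comm _ _⟩
  rw [hmul, hadd, ← mul_assoc, mul_add, coeff_add, coeff_add, coeff_single_mul_X_pow,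
    coeff_single_mul_X_pow_of_ne hkl _ one_ne_zero, coeff_single_mul_X_pow_of_ne hkl _ hN,
    zero_add, add_zero]
  split_ifs with hle
  · have hdiv : ¬ N ∣ e - 2 * N := fun h ↦
      hNe ((Nat.sub_add_cancel hle) ▸ h.add (dvd_mul_left N 2))
    have hdeg : e - 2 * N < (m + n) * N := by
      rw [add_mul] at he
      omega
    refine hv.coeff_eq_zero ?_ ?_ <;> fin_cases k
    · simpa using hdeg
    · simpa using hdeg
    · simpa [Nat.modEq_zero_iff_dvd] using hdiv
    · simpa [Nat.ModEq.comm (a := 0), Nat.modEq_zero_iff_dvd] using hdiv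
  · rfl

theorem q1i_q2i_span_not_mem_ideal_general (N m n i : ℕ)
    (hi1 : 1 ≤ i) (hi2 : i ≤ 2 * N - 1) (hiN : i ≠ N)
    (a b : ℕ → ℂ) (ha0 : a 0 = 1) (hb0 : b 0 = 1) (l1 l2 : ℂ)
    (hmem : MemIdealI N m n
      (C l1 * (∑ s ∈ Finset.range (m + n + 1),
          C (a s) * zP ^ ((m + n - s) * N + i) * wP ^ (N * s))
       + C l2 * (∑ s ∈ Finset.range (m + n + 1),
          C (b s) * wP ^ ((m + n - s) * N + i) * zP ^ (N * s)))) :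
    l1 = 0 ∧ l2 = 0 := by
  have hN : N ≠ 0 := by omega
  have hi : i ≠ 0 := by omega
  have hNi : ¬ N ∣ (m + n) * N + i := by
    rw [Nat.dvd_add_right (dvd_mul_left _ _)]
    exact fun h ↦ hiN (Nat.eq_of_dvd_of_lt_two_mul hi h (by omega))
  have he : (m + n) * N + i < (m + n + 2) * N := by rw [add_mul _ 2]; omega
  have z_coeff := hmem.coeff_single_eq_zero 0 he hNi
  have w_coeff := hmem.coeff_single_eq_zero 1 he hNi
  rw [coeff_add, coeff_C_mul, coeff_C_mul, zP, wP] at z_coeff w_coeff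
  rw [coeff_single_sum_mul_X_pow_mul_X_pow zero_ne_one _ hN,
    coeff_single_sum_mul_X_pow_mul_X_pow_of_ne one_ne_zero _ _ _ hi, ha0] at z_coeff
  rw [coeff_single_sum_mul_X_pow_mul_X_pow one_ne_zero _ hN,
    coeff_single_sum_mul_X_pow_mul_X_pow_of_ne zero_ne_one _ _ _ hi, hb0] at w_coeff
  exact ⟨by simpa using z_coeff, by simpa using w_coeff⟩

theorem q1i_q2i_span_not_mem_ideal (N m n i : ℕ) (hN : 1 ≤ N) (hmn : n < m)
    (hi1 : 1 ≤ i) (hi2 : i ≤ 2 * N - 1) (hiN : i ≠ N)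
    (a b : ℕ → ℂ) (ha0 : a 0 = 1) (hb0 : b 0 = 1)
    (hqa : IsQuasiInv N m n
      (∑ s ∈ Finset.range (m + n + 1),
        C (a s) * zP ^ ((m + n - s) * N + i) * wP ^ (N * s)))
    (hqb : IsQuasiInv N m n
      (∑ s ∈ Finset.range (m + n + 1),
        C (b s) * wP ^ ((m + n - s) * N + i) * zP ^ (N * s)))
    (l1 l2 : ℂ)
    (hmem : MemIdealI N m n
      (C l1 * (∑ s ∈ Finset.range (m + n + 1),
          C (a s) * zP ^ ((m + n - s) * N + i) * wP ^ (N * s))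
       + C l2 * (∑ s ∈ Finset.range (m + n + 1),
          C (b s) * wP ^ ((m + n - s) * N + i) * zP ^ (N * s)))) :
    l1 = 0 ∧ l2 = 0 := by
  exact q1i_q2i_span_not_mem_ideal_general N m n i hi1 hi2 hiN a b ha0 hb0 l1 l2 hmem
end
end

section
/- Assume n ≤ m and let i be an integer with 1 ≤ i ≤ 2N−1 and i ≠ N. If q = ∑_{s=0}^{m+n} aₛ·z^{(m+n−s)N+i}·w^{Ns} with a₀ = 1 is quasi-invariant, then q is annihilated by the Calogero–Moser operator 𝓛₁; likewise, if q′ = ∑_{s=0}^{m+n} bₛ·w^{(m+n−s)N+i}·z^{Ns} with b₀ = 1 is quasi-invariant, then q′ is annihilated by 𝓛₁. -/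
open MvPolynomial Finset

noncomputable section

/-- `p` is annihilated by the Calogero–Moser operator
`𝓛₁ = 4∂z∂w − 4∑ₖ mₖ(ε^k ∂z − ∂w)/(ε^k w − z)`, expressed as a polynomial identity
after clearing denominators. -/
def AnnL1 (N m n : ℕ) (p : R2) : Prop :=
  (∏ k ∈ Finset.range (2 * N), (C (eps N ^ k) * wP - zP)) *
      (pderiv (0 : Fin 2) (pderiv (1 : Fin 2) p)) =
    ∑ k ∈ Finset.range (2 * N),
      C ((mult m n k : ℕ) : ℂ) *
        (∏ j ∈ (Finset.range (2 * N)).erase k, (C (eps N ^ j) * wP - zP)) *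
        (C (eps N ^ k) * pderiv (0 : Fin 2) p - pderiv (1 : Fin 2) p)

/-!
On the affine line `w = 1` the form `q` becomes a polynomial `G`, and its reflections become scalar
multiples of a single polynomial `F`; for `q'` the roles of `F` and `G` are exchanged.  Both are
solutions `f` of `det (f, δf, δ²f; F, δF, δ²F; G, δG, δ²G) = 0`, where `δ` is the infinitesimal
rotation.  Quasi-invariance makes the Wronskian `F δG - δF G` divisible by
`X ^ i ∏ (X - ε ^ k) ^ (2 m_k)`, and the degrees agree, so it is a scalar multiple of this product.
The same holds for `δF δ²G - δ²F δG`, because `δF` vanishes on every mirror of positive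
multiplicity.  Comparing top coefficients determines the ratio of the two Wronskians, and
the second-order equation becomes the radial form of `𝓛₁ f = 0`.
-/

open scoped Polynomial
open Lagrange (nodal)

section AngularDerivative

variable {R : Type*} [CommRing R]

/-- The infinitesimal rotation `z∂z - w∂w` acting on homogeneous forms of degree `D`, written in
the coordinate `X = z / w`: a form `w ^ D * p (z / w)` is sent to
`w ^ D * (angularDeriv D p) (z / w)`. -/
def angularDeriv (D : ℕ) : R[X] →ₗ[R] R[X] :=
  (2 : R) • (LinearMap.mulLeft R Polynomial.X ∘ₗ Polynomial.derivative) - (D : R) • LinearMap.id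

lemma angularDeriv_apply (D : ℕ) (p : R[X]) :
    angularDeriv D p = 2 * Polynomial.X * Polynomial.derivative p - (D : R[X]) * p := by
  simp [angularDeriv, ofNat_smul_eq_nsmul, mul_assoc, Polynomial.smul_eq_C_mul]

/-- The derivation `∂w` on homogeneous forms of degree `D`, written in the coordinate `X = z / w`:
a form `w ^ D * p (z / w)` is sent to `w ^ (D - 1) * (conjDerivative D p) (z / w)`. -/
def conjDerivative (D : ℕ) (p : R[X]) : R[X] :=
  (D : R[X]) * p - Polynomial.X * Polynomial.derivative p

lemma angularDeriv_C_mul (D : ℕ) (c : R) (p : R[X]) :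
    angularDeriv D (Polynomial.C c * p) = Polynomial.C c * angularDeriv D p := by
  simp only [← Polynomial.smul_eq_C_mul, map_smul]

lemma coeff_angularDeriv (D : ℕ) (p : R[X]) (k : ℕ) :
    (angularDeriv D p).coeff k = (2 * k - D) * p.coeff k := by
  rw [angularDeriv_apply, mul_assoc, Polynomial.coeff_sub, Polynomial.coeff_natCast_mul,
    Polynomial.coeff_ofNat_mul]
  cases k <;> simp [Polynomial.coeff_X_mul, Polynomial.coeff_derivative]
  ring

lemma angularDeriv_X_pow (D k : ℕ) :
    angularDeriv D (Polynomial.X ^ k : R[X]) =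
      Polynomial.C (2 * (k : R) - D) * Polynomial.X ^ k := by
  ext j
  simp only [coeff_angularDeriv, Polynomial.coeff_C_mul, Polynomial.coeff_X_pow]
  split_ifs with h <;> simp [h]

lemma natDegree_angularDeriv_le (D : ℕ) (p : R[X]) :
    (angularDeriv D p).natDegree ≤ p.natDegree :=
  Polynomial.natDegree_le_iff_coeff_eq_zero.mpr fun k hk => by
    rw [coeff_angularDeriv, Polynomial.coeff_eq_zero_of_natDegree_lt hk, mul_zero]

lemma X_pow_dvd_angularDeriv (D : ℕ) {p : R[X]} {k : ℕ} (h : Polynomial.X ^ k ∣ p) :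
    Polynomial.X ^ k ∣ angularDeriv D p :=
  Polynomial.X_pow_dvd_iff.mpr fun j hj => by
    rw [coeff_angularDeriv, Polynomial.X_pow_dvd_iff.mp h j hj, mul_zero]

lemma pow_dvd_angularDeriv (D : ℕ) {L p : R[X]} {k : ℕ} (h : L ^ (k + 1) ∣ p) :
    L ^ k ∣ angularDeriv D p := by
  rw [angularDeriv_apply]
  exact dvd_sub ((Polynomial.pow_sub_one_dvd_derivative_of_pow_dvd h).mul_left _)
    (((pow_dvd_pow L k.le_succ).trans h).mul_left _)

lemma angularDeriv_mul (D E : ℕ) (p q : R[X]) :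
    angularDeriv (D + E) (p * q) = angularDeriv D p * q + p * angularDeriv E q := by
  simp only [angularDeriv_apply, Polynomial.derivative_mul]
  push_cast
  ring

lemma angularDeriv_prod {ι : Type*} [DecidableEq ι] (s : Finset ι) (D : ι → ℕ) (f : ι → R[X]) :
    angularDeriv (∑ k ∈ s, D k) (∏ k ∈ s, f k) =
      ∑ k ∈ s, angularDeriv (D k) (f k) * ∏ j ∈ s.erase k, f j := by
  rw [angularDeriv_apply, Polynomial.derivative_prod_finset, Nat.cast_sum, mul_sum, sum_mul,
    ← sum_sub_distrib]
  refine sum_congr rfl fun k hk => ?_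
  rw [angularDeriv_apply, ← mul_prod_erase s f hk]
  ring

lemma X_sub_C_mul_angularDeriv_pow (c : R) (k : ℕ) :
    (Polynomial.X - Polynomial.C c) * angularDeriv k ((Polynomial.X - Polynomial.C c) ^ k) =
      (k : R[X]) * (Polynomial.X + Polynomial.C c) * (Polynomial.X - Polynomial.C c) ^ k := by
  rw [angularDeriv_apply, Polynomial.derivative_X_sub_C_pow]
  cases k
  · simp
  · simp
    ring

end AngularDerivative

section AngularWronskian

variable {R : Type*} [CommRing R]

/-- The Wronskian of two forms of degree `D` with respect to the infinitesimal rotation. -/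
def angularWronskian (D : ℕ) (F G : R[X]) : R[X] :=
  F * angularDeriv D G - angularDeriv D F * G

variable (D : ℕ) {F G : R[X]}

lemma angularDeriv_angularWronskian (F G : R[X]) :
    angularDeriv (D + D) (angularWronskian D F G) =
      F * angularDeriv D (angularDeriv D G) - angularDeriv D (angularDeriv D F) * G := by
  rw [angularWronskian, map_sub, angularDeriv_mul, angularDeriv_mul]
  ring

-- Expansion of the vanishing Wronskian determinant of `f`, `F`, `G` along the row of `f`.
lemma angularWronskian_ode {f : R[X]} (hf : f = F ∨ f = G) :
    angularWronskian D F G * angularDeriv D (angularDeriv D f) +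
        angularWronskian D (angularDeriv D F) (angularDeriv D G) * f =
      angularDeriv (D + D) (angularWronskian D F G) * angularDeriv D f := by
  rw [angularDeriv_angularWronskian, angularWronskian, angularWronskian]
  rcases hf with rfl | rfl <;> ring

lemma X_pow_dvd_angularWronskian {i : ℕ} (F : R[X]) (hG : Polynomial.X ^ i ∣ G) :
    Polynomial.X ^ i ∣ angularWronskian D F G :=
  dvd_sub ((X_pow_dvd_angularDeriv D hG).mul_left _) (hG.mul_left _)

lemma natDegree_angularWronskian_le {d e : ℕ} (hF : F.natDegree ≤ d) (hG : G.natDegree ≤ e) :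
    (angularWronskian D F G).natDegree ≤ d + e :=
  (Polynomial.natDegree_sub_le_of_le
    (Polynomial.natDegree_mul_le_of_le hF ((natDegree_angularDeriv_le D G).trans hG))
    (Polynomial.natDegree_mul_le_of_le ((natDegree_angularDeriv_le D F).trans hF) hG)).trans_eq
    (max_self _)

lemma coeff_angularWronskian_add {d e : ℕ} (hF : F.natDegree ≤ d) (hG : G.natDegree ≤ e) :
    (angularWronskian D F G).coeff (d + e) = 2 * (e - d) * (F.coeff d * G.coeff e) := by
  rw [angularWronskian, Polynomial.coeff_sub,
    Polynomial.coeff_mul_add_eq_of_natDegree_le hF ((natDegree_angularDeriv_le D G).trans hG),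
    Polynomial.coeff_mul_add_eq_of_natDegree_le ((natDegree_angularDeriv_le D F).trans hF) hG,
    coeff_angularDeriv, coeff_angularDeriv]
  ring

lemma angularWronskian_ne_zero [IsDomain R] [CharZero R] (hF : F ≠ 0) (hG : G ≠ 0)
    (hdeg : F.natDegree ≠ G.natDegree) : angularWronskian D F G ≠ 0 := by
  intro hW
  have htop := coeff_angularWronskian_add D (le_refl F.natDegree) (le_refl G.natDegree)
  rw [hW, Polynomial.coeff_zero, eq_comm] at htop
  simp [sub_eq_zero, hF, hG, hdeg.symm] at htop

-- `W(F, G)` only changes sign when `G` is replaced by `H = c F - G`.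
lemma pow_dvd_angularWronskian {L : R[X]} {c : R} {k : ℕ}
    (h : L ^ (k + 1) ∣ Polynomial.C c * F - G) : L ^ k ∣ angularWronskian D F G := by
  set H := Polynomial.C c * F - G with hH
  have hW : angularWronskian D F G = angularDeriv D F * H - F * angularDeriv D H := by
    rw [hH, map_sub, angularDeriv_C_mul, angularWronskian]
    ring
  rw [hW]
  exact dvd_sub (((pow_dvd_pow L k.le_succ).trans h).mul_left _)
    ((pow_dvd_angularDeriv D h).mul_left _)

-- Two derivatives cost two factors `L`; the vanishing of `angularDeriv D F` returns one of them.
lemma pow_dvd_angularWronskian_angularDeriv {L : R[X]} {c : R} {k : ℕ}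
    (h : L ^ (k + 1) ∣ Polynomial.C c * F - G) (hF : k ≠ 0 → L ∣ angularDeriv D F) :
    L ^ k ∣ angularWronskian D (angularDeriv D F) (angularDeriv D G) := by
  rcases k with _ | k
  · simp
  set H := Polynomial.C c * F - G with hH
  have hW : angularWronskian D (angularDeriv D F) (angularDeriv D G) =
      angularDeriv D (angularDeriv D F) * angularDeriv D H -
        angularDeriv D F * angularDeriv D (angularDeriv D H) := by
    simp only [hH, map_sub, angularDeriv_C_mul, angularWronskian]
    ring
  have hδH : L ^ (k + 1) ∣ angularDeriv D H := pow_dvd_angularDeriv D h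
  rw [hW]
  refine dvd_sub (hδH.mul_left _) ?_
  rw [pow_succ']
  exact mul_dvd_mul (hF k.succ_ne_zero) (pow_dvd_angularDeriv D hδH)

end AngularWronskian

section MirrorWeight

variable {R ι : Type*} [CommRing R]

/-- The squared ground state `∏ (X - r k) ^ (2 μ k)` of the mirror arrangement `r` with
multiplicities `μ`, times the monomial `X ^ i`. -/
def mirrorWeight (s : Finset ι) (r : ι → R) (μ : ι → ℕ) (i : ℕ) : R[X] :=
  Polynomial.X ^ i * ∏ k ∈ s, (Polynomial.X - Polynomial.C (r k)) ^ (2 * μ k)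

variable (s : Finset ι) (r : ι → R) (μ : ι → ℕ) (i : ℕ)

lemma monic_mirrorWeight : (mirrorWeight s r μ i).Monic :=
  (Polynomial.monic_X_pow i).mul <|
    Polynomial.monic_prod_of_monic _ _ fun k _ => (Polynomial.monic_X_sub_C (r k)).pow _

lemma natDegree_mirrorWeight [Nontrivial R] :
    (mirrorWeight s r μ i).natDegree = ∑ k ∈ s, μ k + (∑ k ∈ s, μ k + i) := by
  have hmonic : ∀ k ∈ s, ((Polynomial.X - Polynomial.C (r k)) ^ (2 * μ k)).Monic :=
    fun k _ => (Polynomial.monic_X_sub_C (r k)).pow _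
  rw [mirrorWeight, (Polynomial.monic_X_pow i).natDegree_mul
    (Polynomial.monic_prod_of_monic _ _ hmonic), Polynomial.natDegree_X_pow,
    Polynomial.natDegree_prod_of_monic _ _ hmonic]
  simp only [(Polynomial.monic_X_sub_C _).natDegree_pow, Polynomial.natDegree_X_sub_C, mul_one,
    ← mul_sum]
  ring

lemma mirrorWeight_dvd {K : Type*} [Field K] {s : Finset ι} {r : ι → K} {μ : ι → ℕ} {i : ℕ}
    {U : K[X]} (hr : Set.InjOn r s) (hr0 : ∀ k ∈ s, r k ≠ 0) (hX : Polynomial.X ^ i ∣ U)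
    (hU : ∀ k ∈ s, (Polynomial.X - Polynomial.C (r k)) ^ (2 * μ k) ∣ U) :
    mirrorWeight s r μ i ∣ U := by
  have hcoprime {x y : K} (h : x ≠ y) :
      IsCoprime (Polynomial.X - Polynomial.C x) (Polynomial.X - Polynomial.C y) :=
    Polynomial.isCoprime_X_sub_C_of_isUnit_sub (sub_ne_zero.mpr h).isUnit
  refine IsCoprime.mul_dvd (IsCoprime.prod_right fun k hk => ?_) hX
    (prod_dvd_of_coprime (fun k hk l hl hkl => (hcoprime fun h => hkl (hr hk hl h)).pow) hU)
  simpa using (hcoprime (hr0 k hk).symm).pow (m := i) (n := 2 * μ k)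

variable [DecidableEq ι]

lemma sum_mul_nodal :
    ((∑ k ∈ s, μ k : ℕ) : R[X]) * nodal s r =
      ∑ k ∈ s, (μ k : R[X]) * (Polynomial.X - Polynomial.C (r k)) * nodal (s.erase k) r := by
  rw [Nat.cast_sum, sum_mul]
  refine sum_congr rfl fun k hk => ?_
  rw [Lagrange.nodal_eq_mul_nodal_erase hk, mul_assoc]

/-- The coefficient of the first-order term in the radial Calogero–Moser equation. -/
def mirrorDrift : R[X] :=
  ∑ k ∈ s, (μ k : R[X]) * (Polynomial.X + Polynomial.C (r k)) * nodal (s.erase k) r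

lemma nodal_mul_angularDeriv_mirrorWeight :
    nodal s r * angularDeriv ((∑ k ∈ s, μ k + i) + (∑ k ∈ s, μ k + i)) (mirrorWeight s r μ i) =
      2 * mirrorDrift s r μ * mirrorWeight s r μ i := by
  have hdegree : (∑ k ∈ s, μ k + i) + (∑ k ∈ s, μ k + i) = 2 * i + ∑ k ∈ s, 2 * μ k := by
    rw [← mul_sum]
    ring
  have hX : angularDeriv (2 * i) (Polynomial.X ^ i : R[X]) = 0 := by
    simp [angularDeriv_X_pow]
  rw [hdegree, mirrorWeight, angularDeriv_mul, hX, zero_mul, zero_add, angularDeriv_prod,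
    mirrorDrift, mul_sum, mul_sum, mul_sum, sum_mul]
  refine sum_congr rfl fun k hk => ?_
  have hpow := X_sub_C_mul_angularDeriv_pow (r k) (2 * μ k)
  rw [Lagrange.nodal_eq_mul_nodal_erase hk,
    ← mul_prod_erase s (fun k => (Polynomial.X - Polynomial.C (r k)) ^ (2 * μ k)) hk]
  push_cast at hpow
  linear_combination (nodal (s.erase k) r * Polynomial.X ^ i *
    ∏ j ∈ s.erase k, (Polynomial.X - Polynomial.C (r j)) ^ (2 * μ j)) * hpow

lemma two_mul_X_mul_sum_nodal_erase (f : R[X]) :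
    2 * Polynomial.X * ∑ k ∈ s, (μ k : R[X]) * nodal (s.erase k) r *
        (Polynomial.C (r k) * Polynomial.derivative f - conjDerivative (∑ k ∈ s, μ k + i) f) =
      mirrorDrift s r μ * angularDeriv (∑ k ∈ s, μ k + i) f -
        ((∑ k ∈ s, μ k + i : ℕ) : R[X]) * f * (((∑ k ∈ s, μ k : ℕ) : R[X]) * nodal s r) := by
  rw [sum_mul_nodal, mirrorDrift, sum_mul, mul_sum, mul_sum, ← sum_sub_distrib]
  refine sum_congr rfl fun k _ => ?_
  rw [angularDeriv_apply, conjDerivative]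
  ring

end MirrorWeight

lemma eq_C_coeff_mul_of_monic_of_dvd {R : Type*} [CommRing R] {Q U : R[X]} (hQ : Q.Monic)
    (hdvd : Q ∣ U) (hdeg : U.natDegree ≤ Q.natDegree) :
    U = Polynomial.C (U.coeff Q.natDegree) * Q := by
  have hU := Polynomial.eq_leadingCoeff_mul_of_monic_of_dvd_of_natDegree_le hQ hdvd hdeg
  have hcoeff : U.coeff Q.natDegree = U.leadingCoeff := by
    conv_lhs => rw [hU, Polynomial.coeff_C_mul, hQ.coeff_natDegree, mul_one]
  rwa [hcoeff]

section RadialEquation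

variable {K ι : Type*} [Field K] {s : Finset ι} {r : ι → K} {μ : ι → ℕ} {i : ℕ} {F G : K[X]}

/-- `F` and `G`, viewed as forms of degree `∑ μ + i`, are interchanged up to scalars by reflections
in the lines `X = r k`, to the order required by quasi-invariance with multiplicities `μ`.  The
field `dvd_angularDeriv` records that the infinitesimal rotation of `F` vanishes on the mirrors of
positive multiplicity, as do those of `C c * F - G`, which has a multiple root there, and of the
reflection-invariant `C c * F + G`. -/
structure IsMirrorPair (s : Finset ι) (r : ι → K) (μ : ι → ℕ) (i : ℕ) (F G : K[X]) : Prop where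
  injOn : Set.InjOn r s
  root_ne_zero : ∀ k ∈ s, r k ≠ 0
  left_ne_zero : F ≠ 0
  natDegree_left : F.natDegree ≤ ∑ k ∈ s, μ k
  natDegree_right : G.natDegree = ∑ k ∈ s, μ k + i
  X_pow_dvd_right : Polynomial.X ^ i ∣ G
  dvd_sub : ∀ k ∈ s, ∃ c, (Polynomial.X - Polynomial.C (r k)) ^ (2 * μ k + 1) ∣
    Polynomial.C c * F - G
  dvd_angularDeriv : ∀ k ∈ s, μ k ≠ 0 →
    Polynomial.X - Polynomial.C (r k) ∣ angularDeriv (∑ k ∈ s, μ k + i) F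

lemma IsMirrorPair.mirrorWeight_dvd_angularWronskian (h : IsMirrorPair s r μ i F G) :
    mirrorWeight s r μ i ∣ angularWronskian (∑ k ∈ s, μ k + i) F G :=
  mirrorWeight_dvd h.injOn h.root_ne_zero (X_pow_dvd_angularWronskian _ _ h.X_pow_dvd_right)
    fun k hk => (h.dvd_sub k hk).elim fun _ hc => pow_dvd_angularWronskian _ hc

lemma IsMirrorPair.mirrorWeight_dvd_angularWronskian_angularDeriv
    (h : IsMirrorPair s r μ i F G) :
    mirrorWeight s r μ i ∣ angularWronskian (∑ k ∈ s, μ k + i)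
      (angularDeriv (∑ k ∈ s, μ k + i) F) (angularDeriv (∑ k ∈ s, μ k + i) G) :=
  mirrorWeight_dvd h.injOn h.root_ne_zero
    (X_pow_dvd_angularWronskian _ _ (X_pow_dvd_angularDeriv _ h.X_pow_dvd_right))
    fun k hk => (h.dvd_sub k hk).elim fun _ hc =>
      pow_dvd_angularWronskian_angularDeriv _ hc fun hk0 =>
        h.dvd_angularDeriv k hk (by omega)

lemma IsMirrorPair.angularWronskian_eq_C_mul (h : IsMirrorPair s r μ i F G) :
    angularWronskian (∑ k ∈ s, μ k + i) F G =
      Polynomial.C (2 * i * (F.coeff (∑ k ∈ s, μ k) * G.coeff (∑ k ∈ s, μ k + i))) *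
        mirrorWeight s r μ i := by
  have hW := eq_C_coeff_mul_of_monic_of_dvd (monic_mirrorWeight s r μ i)
    h.mirrorWeight_dvd_angularWronskian <| by
      rw [natDegree_mirrorWeight]
      exact natDegree_angularWronskian_le _ h.natDegree_left h.natDegree_right.le
  rw [natDegree_mirrorWeight,
    coeff_angularWronskian_add _ h.natDegree_left h.natDegree_right.le] at hW
  rw [hW]
  push_cast
  congr 3
  ring

lemma IsMirrorPair.angularWronskian_angularDeriv (h : IsMirrorPair s r μ i F G) :
    angularWronskian (∑ k ∈ s, μ k + i)
        (angularDeriv (∑ k ∈ s, μ k + i) F) (angularDeriv (∑ k ∈ s, μ k + i) G) =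
      ((∑ k ∈ s, μ k + i : ℕ) : K[X]) * ((∑ k ∈ s, μ k : ℕ) - i) *
        angularWronskian (∑ k ∈ s, μ k + i) F G := by
  have hδF := (natDegree_angularDeriv_le (∑ k ∈ s, μ k + i) F).trans h.natDegree_left
  have hδG := (natDegree_angularDeriv_le (∑ k ∈ s, μ k + i) G).trans h.natDegree_right.le
  have hW := eq_C_coeff_mul_of_monic_of_dvd (monic_mirrorWeight s r μ i)
    h.mirrorWeight_dvd_angularWronskian_angularDeriv <| by
      rw [natDegree_mirrorWeight]
      exact natDegree_angularWronskian_le _ hδF hδG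
  rw [natDegree_mirrorWeight, coeff_angularWronskian_add _ hδF hδG, coeff_angularDeriv,
    coeff_angularDeriv] at hW
  rw [hW, h.angularWronskian_eq_C_mul]
  simp only [← Polynomial.C_eq_natCast, ← Polynomial.C_sub, ← mul_assoc, ← Polynomial.C_mul]
  congr 2
  push_cast
  ring

variable [CharZero K] [DecidableEq ι]

theorem IsMirrorPair.angularDeriv_ode (h : IsMirrorPair s r μ i F G) (hi : i ≠ 0) {f : K[X]}
    (hf : f = F ∨ f = G) :
    nodal s r * (angularDeriv (∑ k ∈ s, μ k + i) (angularDeriv (∑ k ∈ s, μ k + i) f) +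
        ((∑ k ∈ s, μ k + i : ℕ) : K[X]) * ((∑ k ∈ s, μ k : ℕ) - i) * f) =
      2 * mirrorDrift s r μ * angularDeriv (∑ k ∈ s, μ k + i) f := by
  set D := ∑ k ∈ s, μ k + i
  have hW0 : angularWronskian D F G ≠ 0 := by
    refine angularWronskian_ne_zero D h.left_ne_zero ?_ ?_
    · exact Polynomial.ne_zero_of_natDegree_gt (n := 0) (by rw [h.natDegree_right]; omega)
    · have := h.natDegree_left
      rw [h.natDegree_right]
      omega
  have hδW : nodal s r * angularDeriv (D + D) (angularWronskian D F G) =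
      2 * mirrorDrift s r μ * angularWronskian D F G := by
    rw [h.angularWronskian_eq_C_mul, angularDeriv_C_mul]
    linear_combination Polynomial.C (2 * i * (F.coeff (∑ k ∈ s, μ k) * G.coeff D)) *
      nodal_mul_angularDeriv_mirrorWeight s r μ i
  have hode := angularWronskian_ode D hf
  rw [h.angularWronskian_angularDeriv] at hode
  refine mul_left_cancel₀ hW0 ?_
  linear_combination nodal s r * hode + angularDeriv D f * hδW

theorem IsMirrorPair.radial_equation (h : IsMirrorPair s r μ i F G) (hi : i ≠ 0) {f : K[X]}
    (hf : f = F ∨ f = G) :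
    nodal s r * Polynomial.derivative (conjDerivative (∑ k ∈ s, μ k + i) f) =
      -∑ k ∈ s, (μ k : K[X]) * nodal (s.erase k) r *
        (Polynomial.C (r k) * Polynomial.derivative f - conjDerivative (∑ k ∈ s, μ k + i) f) := by
  have hode := h.angularDeriv_ode hi hf
  have hsum := two_mul_X_mul_sum_nodal_erase s r μ i f
  have hX : (4 * Polynomial.X : K[X]) ≠ 0 :=
    mul_ne_zero (OfNat.ofNat_ne_zero 4) Polynomial.X_ne_zero
  refine mul_left_cancel₀ hX ?_
  simp only [angularDeriv_apply, conjDerivative, Polynomial.derivative_sub,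
    Polynomial.derivative_mul, Polynomial.derivative_X, Polynomial.derivative_natCast,
    Polynomial.derivative_ofNat] at hode hsum ⊢
  push_cast at hode hsum ⊢
  linear_combination -hode + 2 * hsum

end RadialEquation

section Dehomogenization

/-- Dehomogenization `w ↦ 1`, an inverse of `Polynomial.homogenize`: a form `p` of degree `D` in
`z`, `w` equals `w ^ D * (dehomogenize p) (z / w)`. -/
def dehomogenize : R2 →ₐ[ℂ] ℂ[X] :=
  aeval ![Polynomial.X, 1]

lemma dehomogenize_zP : dehomogenize zP = Polynomial.X := by
  simp [dehomogenize, zP]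

lemma dehomogenize_wP : dehomogenize wP = 1 := by
  simp [dehomogenize, wP]

lemma dehomogenize_C (c : ℂ) : dehomogenize (C c) = Polynomial.C c :=
  dehomogenize.commutes c

lemma eq_of_dehomogenize_eq {p q : R2} {D : ℕ} (hp : p.IsHomogeneous D) (hq : q.IsHomogeneous D)
    (h : dehomogenize p = dehomogenize q) : p = q :=
  (Polynomial.homogenize_eq_of_isHomogeneous hp h).symm.trans
    (Polynomial.homogenize_eq_of_isHomogeneous hq rfl)

lemma dehomogenize_pderiv_zero (p : R2) :
    dehomogenize (pderiv 0 p) = Polynomial.derivative (dehomogenize p) := by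
  induction p using MvPolynomial.induction_on with
  | C c => simp [dehomogenize]
  | add p q hp hq => simp only [map_add, hp, hq]
  | mul_X p k hp =>
    simp only [Derivation.leibniz, smul_eq_mul, map_add, map_mul, hp, Polynomial.derivative_mul]
    fin_cases k <;> simp [dehomogenize, add_comm, mul_comm]

lemma dehomogenize_pderiv_one {p : R2} {D : ℕ} (hp : p.IsHomogeneous D) :
    dehomogenize (pderiv 1 p) = conjDerivative D (dehomogenize p) := by
  have heuler : dehomogenize (zP * pderiv 0 p + wP * pderiv 1 p) = dehomogenize (D • p) := by
    rw [← hp.sum_X_mul_pderiv, Fin.sum_univ_two, zP, wP]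
  rw [map_add, map_mul, map_mul, dehomogenize_zP, dehomogenize_wP, dehomogenize_pderiv_zero,
    map_nsmul, nsmul_eq_mul] at heuler
  rw [conjDerivative]
  linear_combination heuler

lemma isHomogeneous_mul_pderiv {σ R : Type*} [CommSemiring R] {p q : MvPolynomial σ R} {a b : ℕ}
    {k : σ} (hp : p.IsHomogeneous (a + 1)) (hq : q.IsHomogeneous b) :
    (p * pderiv k q).IsHomogeneous (a + b) := by
  rcases b with _ | b
  · rw [totalDegree_eq_zero_iff_eq_C.mp ((totalDegree_zero_iff_isHomogeneous _).mpr hq), pderiv_C,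
      mul_zero]
    exact isHomogeneous_zero _ _ _
  · convert hp.mul (hq.pderiv (i := k)) using 1
    omega

variable {ι : Type*} (s : Finset ι) (r : ι → ℂ)

lemma isHomogeneous_mirror (c : ℂ) : (C c * wP - zP).IsHomogeneous 1 :=
  (isHomogeneous_C_mul_X c 1).sub (isHomogeneous_X ℂ 0)

lemma isHomogeneous_prod_mirror : (∏ k ∈ s, (C (r k) * wP - zP)).IsHomogeneous #s := by
  simpa using IsHomogeneous.prod s _ (fun _ => 1) fun k _ => isHomogeneous_mirror (r k)

lemma dehomogenize_prod_mirror :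
    dehomogenize (∏ k ∈ s, (C (r k) * wP - zP)) = (-1) ^ #s * nodal s r := by
  rw [map_prod, nodal, ← prod_const, ← prod_mul_distrib]
  refine prod_congr rfl fun k _ => ?_
  rw [map_sub, map_mul, dehomogenize_C, dehomogenize_wP, dehomogenize_zP]
  ring

lemma annL1_of_dehomogenize {N m n D : ℕ} (hN : 1 ≤ N) {p : R2} (hp : p.IsHomogeneous D)
    (h : nodal (range (2 * N)) (eps N ^ ·) *
        Polynomial.derivative (conjDerivative D (dehomogenize p)) =
      -∑ k ∈ range (2 * N), (mult m n k : ℂ[X]) * nodal ((range (2 * N)).erase k) (eps N ^ ·) *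
        (Polynomial.C (eps N ^ k) * Polynomial.derivative (dehomogenize p) -
          conjDerivative D (dehomogenize p))) :
    AnnL1 N m n p := by
  have hcard {k : ℕ} (hk : k ∈ range (2 * N)) : #((range (2 * N)).erase k) = 2 * N - 1 := by
    rw [card_erase_of_mem hk, card_range]
  refine eq_of_dehomogenize_eq (D := 2 * N - 1 + (D - 1)) ?_ ?_ ?_
  · refine isHomogeneous_mul_pderiv ?_ hp.pderiv
    convert isHomogeneous_prod_mirror (range (2 * N)) (eps N ^ ·)
    rw [card_range]
    omega
  · refine IsHomogeneous.sum _ _ _ fun k hk => IsHomogeneous.mul ?_ ?_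
    · rw [← hcard hk]
      exact (isHomogeneous_prod_mirror _ (eps N ^ ·)).C_mul _
    · exact (hp.pderiv.C_mul _).sub hp.pderiv
  · have hsign : (-1 : ℂ[X]) ^ (2 * N - 1) = -1 := Odd.neg_one_pow ⟨N - 1, by omega⟩
    rw [map_mul, dehomogenize_prod_mirror, card_range, Even.neg_one_pow (even_two_mul N), one_mul,
      dehomogenize_pderiv_zero, dehomogenize_pderiv_one hp, h, map_sum, ← sum_neg_distrib]
    refine sum_congr rfl fun k hk => ?_
    rw [map_mul, map_mul, dehomogenize_prod_mirror, hcard hk, hsign, map_sub, map_mul,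
      dehomogenize_pderiv_zero, dehomogenize_pderiv_one hp, dehomogenize_C, dehomogenize_C,
      Polynomial.C_eq_natCast]
    ring

end Dehomogenization

section GapForm

variable {K A : Type*} [Field K] [CommRing A] [Algebra K A] (N M i : ℕ) (a : ℕ → K)

/-- The form `∑ a s * x ^ ((M - s) * N + i) * y ^ (N * s)` of degree `M * N + i`, evaluated in an
arbitrary algebra so that `q`, `q'`, their reflections and their dehomogenizations are all
instances of it. -/
def gapForm (x y : A) : A :=
  ∑ s ∈ range (M + 1), algebraMap K A (a s) * x ^ ((M - s) * N + i) * y ^ (N * s)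

lemma map_gapForm {B : Type*} [CommRing B] [Algebra K B] (φ : A →ₐ[K] B) (x y : A) :
    φ (gapForm N M i a x y) = gapForm N M i a (φ x) (φ y) := by
  simp only [gapForm, map_sum, map_mul, map_pow, AlgHom.commutes]

variable {N M i} in
lemma exponent_add_of_mem_range {s : ℕ} (hs : s ∈ range (M + 1)) :
    (M - s) * N + i + N * s = M * N + i := by
  obtain ⟨t, rfl⟩ := Nat.exists_eq_add_of_le (mem_range_succ_iff.mp hs)
  rw [Nat.add_sub_cancel_left]
  ring

variable {N} in
lemma pow_mul_pow_mul_eq_one {r : K} (hr : r ^ (2 * N) = 1) (s : ℕ) :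
    r ^ (N * s) * r ^ (N * s) = 1 := by
  rw [← pow_add, ← two_mul, ← mul_assoc, pow_mul, hr, one_pow]

lemma gapForm_algebraMap_mul {r : K} (hr : r ^ (2 * N) = 1) (x y : A) :
    gapForm N M i a (algebraMap K A r * x) (algebraMap K A r⁻¹ * y) =
      algebraMap K A (r ^ (M * N + i)) * gapForm N M i a x y := by
  rw [gapForm, gapForm, mul_sum]
  refine sum_congr rfl fun s hs => ?_
  have hpow : r ^ ((M - s) * N + i) * r⁻¹ ^ (N * s) = r ^ (M * N + i) := by
    rw [inv_pow, inv_eq_of_mul_eq_one_left (pow_mul_pow_mul_eq_one hr s), ← pow_add,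
      exponent_add_of_mem_range hs]
  rw [← hpow]
  simp only [map_mul, map_pow]
  ring

lemma gapForm_algebraMap_inv_mul {r : K} (hr : r ^ (2 * N) = 1) (x y : A) :
    gapForm N M i a (algebraMap K A r⁻¹ * x) (algebraMap K A r * y) =
      algebraMap K A (r ^ (M * N + i))⁻¹ * gapForm N M i a x y := by
  have hinv : r⁻¹ ^ (2 * N) = 1 := by rw [inv_pow, hr, inv_one]
  simpa only [inv_inv, inv_pow] using gapForm_algebraMap_mul N M i a hinv x y

lemma isHomogeneous_gapForm {σ : Type*} {x y : MvPolynomial σ K} (hx : x.IsHomogeneous 1)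
    (hy : y.IsHomogeneous 1) : (gapForm N M i a x y).IsHomogeneous (M * N + i) := by
  refine IsHomogeneous.sum _ _ _ fun s hs => ?_
  rw [← exponent_add_of_mem_range hs]
  simpa only [one_mul, algebraMap_eq] using
    ((hx.pow ((M - s) * N + i)).C_mul (a s)).mul (hy.pow (N * s))

lemma natDegree_gapForm_one_X_le :
    (gapForm N M i a 1 (Polynomial.X : K[X])).natDegree ≤ M * N := by
  refine Polynomial.natDegree_sum_le_of_forall_le _ _ fun s hs => ?_
  rw [one_pow, mul_one]
  refine (Polynomial.natDegree_C_mul_X_pow_le _ _).trans ?_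
  rw [mul_comm]
  exact Nat.mul_le_mul_right N (mem_range_succ_iff.mp hs)

variable {N}

lemma gapForm_one_X_ne_zero (hN : N ≠ 0) {a : ℕ → K} (ha : a 0 ≠ 0) :
    gapForm N M i a 1 (Polynomial.X : K[X]) ≠ 0 := by
  have hcoeff : (gapForm N M i a 1 (Polynomial.X : K[X])).coeff 0 = a 0 := by
    rw [gapForm, Polynomial.finsetSum_coeff, sum_eq_single_of_mem 0 (by simp)]
    · simp
    · intro s _ hs
      simp [Polynomial.coeff_X_pow, hN, hs]
  intro h
  simp [h, ha.symm] at hcoeff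

lemma natDegree_gapForm_X_one (hN : N ≠ 0) {a : ℕ → K} (ha : a 0 ≠ 0) :
    (gapForm N M i a (Polynomial.X : K[X]) 1).natDegree = M * N + i := by
  refine Polynomial.natDegree_eq_of_le_of_coeff_ne_zero ?_ ?_
  · refine Polynomial.natDegree_sum_le_of_forall_le _ _ fun s hs => ?_
    rw [one_pow, mul_one, ← exponent_add_of_mem_range hs]
    exact (Polynomial.natDegree_C_mul_X_pow_le _ _).trans (Nat.le_add_right _ _)
  · rw [gapForm, Polynomial.finsetSum_coeff, sum_eq_single_of_mem 0 (by simp)]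
    · simpa using ha
    · intro s hs hs0
      have hexp := exponent_add_of_mem_range (N := N) (i := i) hs
      have hpos : 0 < N * s := Nat.pos_of_ne_zero (mul_ne_zero hN hs0)
      rw [one_pow, mul_one, Polynomial.algebraMap_eq, Polynomial.coeff_C_mul_X_pow,
        if_neg (by omega)]

variable (N)

lemma X_pow_dvd_gapForm_X_one : Polynomial.X ^ i ∣ gapForm N M i a (Polynomial.X : K[X]) 1 := by
  refine dvd_sum fun s _ => ?_
  rw [one_pow, mul_one]
  exact (pow_dvd_pow _ (Nat.le_add_left _ _)).mul_left _

-- The exponents `e` and `D - e` of paired monomials have opposite weights `2e - D`.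
lemma eval_angularDeriv_gapForm_X_one {r : K} (hr : r ^ (2 * N) = 1) :
    (angularDeriv (M * N + i) (gapForm N M i a (Polynomial.X : K[X]) 1)).eval r =
      -r ^ (M * N + i) *
        (angularDeriv (M * N + i) (gapForm N M i a 1 (Polynomial.X : K[X]))).eval r := by
  simp only [gapForm, one_pow, mul_one, map_sum, Polynomial.algebraMap_eq, angularDeriv_C_mul,
    angularDeriv_X_pow, Polynomial.eval_finsetSum, Polynomial.eval_mul, Polynomial.eval_C,
    Polynomial.eval_pow, Polynomial.eval_X, mul_sum]
  refine sum_congr rfl fun s hs => ?_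
  rw [← exponent_add_of_mem_range hs]
  rw [pow_add]
  push_cast
  linear_combination (-(a s) * (((M - s : ℕ) : K) * N + i - N * s) * r ^ ((M - s) * N + i)) *
    pow_mul_pow_mul_eq_one hr s

variable {N}

lemma X_sub_C_dvd_angularDeriv_gapForm [CharZero K] (hN : N ≠ 0) {r : K} (hr : r ^ (2 * N) = 1)
    {a : ℕ → K} {k : ℕ} (hk : k ≠ 0)
    (h : (Polynomial.X - Polynomial.C r) ^ (k + 1) ∣
      Polynomial.C (r ^ (M * N + i)) * gapForm N M i a 1 Polynomial.X -
        gapForm N M i a Polynomial.X 1) :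
    Polynomial.X - Polynomial.C r ∣
      angularDeriv (M * N + i) (gapForm N M i a 1 (Polynomial.X : K[X])) := by
  have hr0 : r ≠ 0 := (IsUnit.of_pow_eq_one hr (by omega)).ne_zero
  have hδ := (dvd_pow_self _ hk).trans (pow_dvd_angularDeriv (M * N + i) h)
  rw [Polynomial.dvd_iff_isRoot, Polynomial.IsRoot, map_sub, angularDeriv_C_mul,
    Polynomial.eval_sub, Polynomial.eval_mul, Polynomial.eval_C,
    eval_angularDeriv_gapForm_X_one N M i a hr, neg_mul, sub_neg_eq_add, add_self_eq_zero] at hδ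
  exact Polynomial.dvd_iff_isRoot.mpr ((mul_eq_zero.mp hδ).resolve_left (pow_ne_zero _ hr0))

lemma isMirrorPair_gapForm [CharZero K] {ι : Type*} {s : Finset ι} {r : ι → K} {μ : ι → ℕ}
    {a : ℕ → K} (hN : N ≠ 0) (ha : a 0 ≠ 0) (hμ : ∑ k ∈ s, μ k = M * N) (hinj : Set.InjOn r s)
    (hr : ∀ k ∈ s, r k ^ (2 * N) = 1)
    (h : ∀ k ∈ s, (Polynomial.X - Polynomial.C (r k)) ^ (2 * μ k + 1) ∣
      Polynomial.C (r k ^ (M * N + i)) * gapForm N M i a 1 Polynomial.X -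
        gapForm N M i a Polynomial.X 1) :
    IsMirrorPair s r μ i (gapForm N M i a 1 Polynomial.X) (gapForm N M i a Polynomial.X 1) where
  injOn := hinj
  root_ne_zero k hk := (IsUnit.of_pow_eq_one (hr k hk) (by omega)).ne_zero
  left_ne_zero := gapForm_one_X_ne_zero M i hN ha
  natDegree_left := hμ ▸ natDegree_gapForm_one_X_le N M i a
  natDegree_right := hμ ▸ natDegree_gapForm_X_one M i hN ha
  X_pow_dvd_right := X_pow_dvd_gapForm_X_one N M i a
  dvd_sub k hk := ⟨_, h k hk⟩
  dvd_angularDeriv k hk hk0 := by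
    rw [hμ]
    exact X_sub_C_dvd_angularDeriv_gapForm M i hN (hr k hk) (by omega) (h k hk)

end GapForm

lemma dvd_C_mul_sub_of_dvd_C_inv_mul_sub {K : Type*} [Field K] {L F G : K[X]} {c : K}
    (hc : c ≠ 0) (h : L ∣ Polynomial.C c⁻¹ * G - F) : L ∣ Polynomial.C c * F - G := by
  have hinv : Polynomial.C c * Polynomial.C c⁻¹ = 1 := by
    rw [← Polynomial.C_mul, mul_inv_cancel₀ hc, Polynomial.C_1]
  have hneg : Polynomial.C c * F - G = -Polynomial.C c * (Polynomial.C c⁻¹ * G - F) := by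
    linear_combination G * hinv
  exact hneg ▸ h.mul_left _

section Dihedral

lemma isPrimitiveRoot_eps {N : ℕ} (hN : N ≠ 0) : IsPrimitiveRoot (eps N) (2 * N) := by
  have heps : eps N = Complex.exp (2 * Real.pi * Complex.I / (2 * N : ℕ)) := by
    rw [eps, Nat.cast_mul, Nat.cast_two, mul_assoc, mul_div_mul_left _ _ two_ne_zero]
  rw [heps]
  exact Complex.isPrimitiveRoot_exp (2 * N) (by omega)

lemma eps_pow_pow_two_mul {N : ℕ} (hN : N ≠ 0) (j : ℕ) : (eps N ^ j) ^ (2 * N) = 1 := by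
  rw [pow_right_comm, (isPrimitiveRoot_eps hN).pow_eq_one, one_pow]

lemma sum_mult (N m n : ℕ) : ∑ k ∈ range (2 * N), mult m n k = (m + n) * N := by
  induction N with
  | zero => simp
  | succ N ih =>
    rw [mul_add_one, sum_range_succ, sum_range_succ, ih, mult, mult, if_pos (even_two_mul N),
      if_neg (by simp)]
    ring

lemma dehomogenize_dihRefl_zP (N j : ℕ) :
    dehomogenize (dihRefl N j zP) = algebraMap ℂ ℂ[X] (eps N ^ j) * 1 := by
  simp [dihRefl, zP, dehomogenize]

lemma dehomogenize_dihRefl_wP (N j : ℕ) :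
    dehomogenize (dihRefl N j wP) = algebraMap ℂ ℂ[X] (eps N ^ j)⁻¹ * Polynomial.X := by
  simp [dihRefl, wP, dehomogenize]

lemma IsQuasiInv.X_sub_C_pow_dvd {N m n j : ℕ} {p : R2} (hp : IsQuasiInv N m n p)
    (hj : j < 2 * N) :
    (Polynomial.X - Polynomial.C (eps N ^ j)) ^ (2 * mult m n j + 1) ∣
      dehomogenize (dihRefl N j p) - dehomogenize p := by
  simpa [dehomogenize_zP, dehomogenize_wP, dehomogenize_C] using map_dvd dehomogenize (hp j hj)

lemma annL1_of_isHomogeneous {N m n i : ℕ} {a : ℕ → ℂ} (hN : N ≠ 0) (hi : i ≠ 0) (ha : a 0 ≠ 0)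
    {p : R2} (hp : p.IsHomogeneous ((m + n) * N + i))
    (hdehom : dehomogenize p = gapForm N (m + n) i a 1 Polynomial.X ∨
      dehomogenize p = gapForm N (m + n) i a Polynomial.X 1)
    (h : ∀ j < 2 * N, (Polynomial.X - Polynomial.C (eps N ^ j)) ^ (2 * mult m n j + 1) ∣
      Polynomial.C ((eps N ^ j) ^ ((m + n) * N + i)) * gapForm N (m + n) i a 1 Polynomial.X -
        gapForm N (m + n) i a Polynomial.X 1) :
    AnnL1 N m n p := by
  have hpair : IsMirrorPair (range (2 * N)) (eps N ^ ·) (mult m n) i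
      (gapForm N (m + n) i a 1 Polynomial.X) (gapForm N (m + n) i a Polynomial.X 1) := by
    refine isMirrorPair_gapForm (m + n) i hN ha (sum_mult N m n) ?_
      (fun j _ => eps_pow_pow_two_mul hN j) fun j hj => h j (mem_range.mp hj)
    simpa using (isPrimitiveRoot_eps hN).injOn_pow
  have hradial := hpair.radial_equation hi hdehom
  rw [sum_mult] at hradial
  exact annL1_of_dehomogenize (by omega) hp hradial

theorem annL1_gapForm_zP_wP {N m n i : ℕ} {a : ℕ → ℂ} (hN : N ≠ 0) (hi : i ≠ 0) (ha : a 0 ≠ 0)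
    (hq : IsQuasiInv N m n (gapForm N (m + n) i a zP wP)) :
    AnnL1 N m n (gapForm N (m + n) i a zP wP) := by
  refine annL1_of_isHomogeneous hN hi ha
    (isHomogeneous_gapForm _ _ _ _ (isHomogeneous_X ℂ 0) (isHomogeneous_X ℂ 1)) (Or.inr ?_)
    fun j hj => ?_
  · rw [map_gapForm, dehomogenize_zP, dehomogenize_wP]
  · have hdvd := hq.X_sub_C_pow_dvd hj
    rwa [map_gapForm, map_gapForm, map_gapForm, dehomogenize_dihRefl_zP,
      dehomogenize_dihRefl_wP, dehomogenize_zP, dehomogenize_wP,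
      gapForm_algebraMap_mul _ _ _ _ (eps_pow_pow_two_mul hN j)] at hdvd

theorem annL1_gapForm_wP_zP {N m n i : ℕ} {b : ℕ → ℂ} (hN : N ≠ 0) (hi : i ≠ 0) (hb : b 0 ≠ 0)
    (hq : IsQuasiInv N m n (gapForm N (m + n) i b wP zP)) :
    AnnL1 N m n (gapForm N (m + n) i b wP zP) := by
  refine annL1_of_isHomogeneous hN hi hb
    (isHomogeneous_gapForm _ _ _ _ (isHomogeneous_X ℂ 1) (isHomogeneous_X ℂ 0)) (Or.inl ?_)
    fun j hj => ?_
  · rw [map_gapForm, dehomogenize_zP, dehomogenize_wP]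
  · have hdvd := hq.X_sub_C_pow_dvd hj
    have hunit : eps N ^ j ≠ 0 :=
      (IsUnit.of_pow_eq_one (eps_pow_pow_two_mul hN j) (by omega)).ne_zero
    rw [map_gapForm, map_gapForm, map_gapForm, dehomogenize_dihRefl_zP,
      dehomogenize_dihRefl_wP, dehomogenize_zP, dehomogenize_wP,
      gapForm_algebraMap_inv_mul _ _ _ _ (eps_pow_pow_two_mul hN j)] at hdvd
    exact dvd_C_mul_sub_of_dvd_C_inv_mul_sub (pow_ne_zero _ hunit) hdvd

theorem q1i_q2i_mHarmonic_L1_general (N m n i : ℕ) (hN : N ≠ 0) (hi : i ≠ 0) :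
    (∀ a : ℕ → ℂ, a 0 ≠ 0 → IsQuasiInv N m n (gapForm N (m + n) i a zP wP) →
      AnnL1 N m n (gapForm N (m + n) i a zP wP)) ∧
    (∀ b : ℕ → ℂ, b 0 ≠ 0 → IsQuasiInv N m n (gapForm N (m + n) i b wP zP) →
      AnnL1 N m n (gapForm N (m + n) i b wP zP)) :=
  ⟨fun _ ha hq => annL1_gapForm_zP_wP hN hi ha hq,
    fun _ hb hq => annL1_gapForm_wP_zP hN hi hb hq⟩

end Dihedral

theorem q1i_q2i_mHarmonic_L1 (N m n i : ℕ) (hN : 1 ≤ N) (hnm : n ≤ m)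
    (hi1 : 1 ≤ i) (hi2 : i ≤ 2 * N - 1) (hiN : i ≠ N) :
    (∀ a : ℕ → ℂ, a 0 = 1 →
      IsQuasiInv N m n
        (∑ s ∈ Finset.range (m + n + 1),
          C (a s) * zP ^ ((m + n - s) * N + i) * wP ^ (N * s)) →
      AnnL1 N m n
        (∑ s ∈ Finset.range (m + n + 1),
          C (a s) * zP ^ ((m + n - s) * N + i) * wP ^ (N * s))) ∧
    (∀ b : ℕ → ℂ, b 0 = 1 →
      IsQuasiInv N m n
        (∑ s ∈ Finset.range (m + n + 1),
          C (b s) * wP ^ ((m + n - s) * N + i) * zP ^ (N * s)) →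
      AnnL1 N m n
        (∑ s ∈ Finset.range (m + n + 1),
          C (b s) * wP ^ ((m + n - s) * N + i) * zP ^ (N * s))) := by
  obtain ⟨hq, hq'⟩ := q1i_q2i_mHarmonic_L1_general N m n i (by omega) (by omega)
  exact ⟨fun a ha => hq a (ha ▸ one_ne_zero), fun b hb => hq' b (hb ▸ one_ne_zero)⟩
end
end
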